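/- Let G be a finite group, let p_1, …, p_l be the prime divisors of |G|, let n ≥ 1 be an integer, and let D_n be the greatest common divisor of p_1^n − 1, …, p_l^n − 1. Then k_{n−1}(G) ≡ |G|^{n−1} (mod D_n), where k_{n−1}(G) is the number of conjugacy classes of commuting (n−1)-tuples in G (with the convention k_0(G) = 1). -/

import Mathlib

/-! By Möbius inversion, the number of `n`-tuples with entries in `H`, for each subgroup `H`,
determines how many `n`-tuples generate each subgroup. The first number is `|H| ^ n`, which is `1`
modulo `D_n`, just as if the trivial tuple were the only one; hence modulo `D_n` the number of
tuples generating `H` is `1` for the trivial subgroup and `0` for all others. A tuple commutes if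
and only if it generates an abelian subgroup, so summing over these gives `|Hom(ℤ ^ n, G)| ≡ 1`.
Burnside's lemma turns this into `k_{n-1}(G) * |G| ≡ 1`, and `|G| ^ (n - 1)` is also an inverse of
`|G|` modulo `D_n`. -/

open Finset Subgroup

theorem natCast_pow_eq_one_of_primeFactors {R : Type*} [CommSemiring R] {N n : ℕ} (hN : N ≠ 0)
    (h : ∀ p ∈ N.primeFactors, (p : R) ^ n = 1) : (N : R) ^ n = 1 := by
  nth_rw 1 [Nat.prod_primeFactors_pow_factorization hN]
  rw [Nat.cast_prod, ← prod_pow]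
  exact prod_eq_one fun p hp => by
    rw [Nat.cast_pow, pow_right_comm, h p hp, one_pow]

theorem natCast_pow_eq_one_of_dvd_pow_sub_one {D a n : ℕ} (ha : 0 < a) (h : D ∣ a ^ n - 1) :
    (a : ZMod D) ^ n = 1 := by
  rw [← ZMod.natCast_eq_zero_iff, Nat.cast_sub (Nat.one_le_pow _ _ ha), sub_eq_zero] at h
  rwa [Nat.cast_pow, Nat.cast_one] at h

theorem eq_of_forall_sum_le_eq {α M : Type*} [Fintype α] [PartialOrder α] [DecidableLE α]
    [AddCancelCommMonoid M] {f g : α → M}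
    (h : ∀ a, ∑ b with b ≤ a, f b = ∑ b with b ≤ a, g b) : f = g := by
  classical
  funext a
  induction a using WellFoundedLT.induction with
  | ind a ih =>
  have hlt : ∑ b ∈ ({b | b ≤ a} : Finset α).erase a, f b =
      ∑ b ∈ ({b | b ≤ a} : Finset α).erase a, g b :=
    sum_congr rfl fun b hb =>
      ih b (((mem_filter_univ b).mp (mem_of_mem_erase hb)).lt_of_ne (ne_of_mem_erase hb))
  have hle := h a
  rw [← add_sum_erase _ f (a := a) (by simp), ← add_sum_erase _ g (a := a) (by simp), hlt] at hle
  exact add_right_cancel hle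

section GeneratingTuples

variable {G : Type*} [Group G] (ι : Type*)

/-- P. Hall's Eulerian function of a subgroup `H`: the number of families indexed by `ι` that
generate `H`. -/
noncomputable def numGeneratingTuples (H : Subgroup G) : ℕ :=
  Nat.card {t : ι → G // closure (Set.range t) = H}

theorem card_tuples_closure_le [Finite ι] (H : Subgroup G) :
    Nat.card {t : ι → G // closure (Set.range t) ≤ H} = Nat.card H ^ Nat.card ι := by
  simp only [closure_le, Set.range_subset_iff, SetLike.mem_coe]
  rw [Nat.card_congr Equiv.subtypePiEquivPi, Nat.card_fun]

variable [Finite G] [Finite ι]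

theorem card_tuples_closure_eq_sum [Fintype (Subgroup G)] (P : Subgroup G → Prop)
    [DecidablePred P] :
    Nat.card {t : ι → G // P (closure (Set.range t))} =
      ∑ H with P H, numGeneratingTuples ι H := by
  rw [← Nat.card_congr (Equiv.sigmaSubtypeFiberEquivSubtype
    (fun t : ι → G => closure (Set.range t)) fun _ => Iff.rfl), Nat.card_sigma]
  exact (sum_subtype _ (by simp) (numGeneratingTuples ι)).symm

variable {ι} {R : Type*} [CommRing R]

theorem natCast_numGeneratingTuples [DecidableEq (Subgroup G)]
    (h : ∀ p ∈ (Nat.card G).primeFactors, (p : R) ^ Nat.card ι = 1) :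
    (fun H : Subgroup G => (numGeneratingTuples ι H : R)) = Pi.single ⊥ 1 := by
  classical
  have := Fintype.ofFinite (Subgroup G)
  refine eq_of_forall_sum_le_eq fun H => ?_
  calc ∑ K with K ≤ H, (numGeneratingTuples ι K : R)
      = (Nat.card H : R) ^ Nat.card ι := by
        rw [← Nat.cast_sum, ← card_tuples_closure_eq_sum ι (· ≤ H), card_tuples_closure_le,
          Nat.cast_pow]
    _ = 1 := natCast_pow_eq_one_of_primeFactors Nat.card_pos.ne' fun p hp =>
        h p (Nat.primeFactors_mono H.card_subgroup_dvd_card Nat.card_pos.ne' hp)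
    _ = ∑ K with K ≤ H, Pi.single (⊥ : Subgroup G) (1 : R) K := by simp [Pi.single_apply]

theorem natCast_card_tuples_closure_eq_one
    (h : ∀ p ∈ (Nat.card G).primeFactors, (p : R) ^ Nat.card ι = 1)
    {P : Subgroup G → Prop} (hP : P ⊥) :
    (Nat.card {t : ι → G // P (closure (Set.range t))} : R) = 1 := by
  classical
  have := Fintype.ofFinite (Subgroup G)
  rw [card_tuples_closure_eq_sum, Nat.cast_sum,
    sum_congr rfl fun H _ => congrFun (natCast_numGeneratingTuples h) H]
  simp [Pi.single_apply, hP]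

end GeneratingTuples

section CommutingTuples

variable (G : Type*) [Group G] (ι : Type*)

/-- The families of pairwise commuting elements of `G` indexed by `ι`, with the action of `G` by
simultaneous conjugation. For `ι = Fin m` they represent `Hom(ℤ ^ m, G)`. -/
def commutingTuples : SubMulAction (ConjAct G) (ι → G) where
  carrier := {t | ∀ i j, Commute (t i) (t j)}
  smul_mem' g _ ht i j := (ht i j).map (MulDistribMulAction.toMonoidHom G g)

variable {G ι}

theorem mem_commutingTuples {t : ι → G} :
    t ∈ commutingTuples G ι ↔ ∀ i j, Commute (t i) (t j) :=
  Iff.rfl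

theorem mem_commutingTuples_iff_isMulCommutative_closure {t : ι → G} :
    t ∈ commutingTuples G ι ↔ IsMulCommutative (closure (Set.range t)) := by
  refine ⟨fun ht => isMulCommutative_closure ?_, fun _ i j => ?_⟩
  · rintro _ ⟨i, rfl⟩ _ ⟨j, rfl⟩
    exact ht i j
  · exact setLike_mul_comm (s := closure (Set.range t)) (subset_closure ⟨i, rfl⟩)
      (subset_closure ⟨j, rfl⟩)

theorem natCast_card_commutingTuples_eq_one [Finite G] [Finite ι] {R : Type*} [CommRing R]
    (h : ∀ p ∈ (Nat.card G).primeFactors, (p : R) ^ Nat.card ι = 1) :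
    (Nat.card (commutingTuples G ι) : R) = 1 := by
  rw [Nat.card_congr (Equiv.subtypeEquivRight fun _ =>
    mem_commutingTuples_iff_isMulCommutative_closure)]
  exact natCast_card_tuples_closure_eq_one (P := fun H => IsMulCommutative H) h inferInstance

theorem cons_mem_commutingTuples_iff {m : ℕ} {g : G} {t : Fin m → G} :
    (Fin.cons g t : Fin (m + 1) → G) ∈ commutingTuples G (Fin (m + 1)) ↔
      t ∈ commutingTuples G (Fin m) ∧ ConjAct.toConjAct g • t = t := by
  simp only [mem_commutingTuples, Fin.forall_fin_succ, Fin.cons_zero, Fin.cons_succ,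
    Commute.refl, true_and, funext_iff, Pi.smul_apply, ConjAct.toConjAct_smul,
    mul_inv_eq_iff_eq_mul, ← commute_iff_eq, forall_and, Commute.symm_iff (b := g)]
  tauto

variable (G) in
/-- A commuting `(m + 1)`-tuple is an element of `G` together with a commuting `m`-tuple that this
element fixes under conjugation. -/
def sigmaFixedByEquivCommutingTuples (m : ℕ) :
    (Σ g : ConjAct G, MulAction.fixedBy (commutingTuples G (Fin m)) g) ≃
      commutingTuples G (Fin (m + 1)) where
  toFun x := ⟨Fin.cons (ConjAct.ofConjAct x.1) x.2.1.1,
    cons_mem_commutingTuples_iff.mpr ⟨x.2.1.2, congrArg Subtype.val x.2.2⟩⟩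
  invFun t :=
    have ht := cons_mem_commutingTuples_iff.mp ((Fin.cons_self_tail t.1).symm ▸ t.2)
    ⟨ConjAct.toConjAct (t.1 0), ⟨Fin.tail t.1, ht.1⟩, Subtype.ext ht.2⟩
  left_inv _ := rfl
  right_inv t := Subtype.ext (Fin.cons_self_tail t.1)

variable (G) in
theorem card_orbits_commutingTuples_mul_card (m : ℕ) :
    Nat.card (MulAction.orbitRel.Quotient (ConjAct G) (commutingTuples G (Fin m))) * Nat.card G =
      Nat.card (commutingTuples G (Fin (m + 1))) := by
  rw [← Nat.card_congr (sigmaFixedByEquivCommutingTuples G m),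
    Nat.card_congr (MulAction.sigmaFixedByEquivOrbitsProdGroup _ _), Nat.card_prod,
    Nat.card_congr (ConjAct.toConjAct (G := G)).toEquiv]

theorem orbitRel_commutingTuples_iff {t t' : commutingTuples G ι} :
    MulAction.orbitRel (ConjAct G) (commutingTuples G ι) t t' ↔
      ∃ g : G, ∀ i, t'.1 i = g * t.1 i * g⁻¹ := by
  rw [(MulAction.orbitRel _ _).comm', MulAction.orbitRel_apply, MulAction.mem_orbit_iff]
  refine ConjAct.toConjAct.exists_congr_left.trans (exists_congr fun g => ?_)
  rw [eq_comm, Subtype.ext_iff, funext_iff]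
  rfl

variable (G) in
theorem card_conjClasses_commutingTuples_mul_card (m : ℕ) :
    Nat.card (Quot fun t t' : commutingTuples G (Fin m) => ∃ g : G, ∀ i, t'.1 i = g * t.1 i * g⁻¹) *
      Nat.card G = Nat.card (commutingTuples G (Fin (m + 1))) := by
  rw [Nat.card_congr (Quot.congrRight fun _ _ => orbitRel_commutingTuples_iff.symm)]
  exact card_orbits_commutingTuples_mul_card G m

end CommutingTuples

/-- Let `G` be a finite group with prime divisors `p_1, …, p_l`, let
`n ≥ 1`, and let `D_n = gcd(p_1^n − 1, …, p_l^n − 1)`.  Then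
`k_{n-1}(G) ≡ |G|^{n-1} (mod D_n)`, where `k_{n-1}(G)` is the number of conjugacy classes
of commuting `(n-1)`-tuples in `G` (for `n = 1` the empty tuple gives `k_0(G) = 1`). -/
theorem stmt_19 {G : Type*} [Group G] [Fintype G] (n : ℕ) (hn : 1 ≤ n)
    (D : ℕ) (hD : D = Finset.gcd (Nat.card G).primeFactors (fun p => p ^ n - 1)) :
    (Nat.card (Quot (fun t t' : {f : Fin (n - 1) → G // ∀ i j, Commute (f i) (f j)} =>
        ∃ g : G, ∀ i, (t' : Fin (n - 1) → G) i = g * (t : Fin (n - 1) → G) i * g⁻¹)) : ℤ)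
      ≡ (Nat.card G : ℤ) ^ (n - 1) [ZMOD (D : ℤ)] := by
  obtain ⟨m, rfl⟩ := Nat.exists_eq_add_of_le' hn
  have hp : ∀ p ∈ (Nat.card G).primeFactors, (p : ZMod D) ^ (m + 1) = 1 := fun p hmem =>
    natCast_pow_eq_one_of_dvd_pow_sub_one (Nat.pos_of_mem_primeFactors hmem)
      (hD ▸ Finset.gcd_dvd hmem)
  have hG : (Nat.card G : ZMod D) ^ (m + 1) = 1 :=
    natCast_pow_eq_one_of_primeFactors Nat.card_pos.ne' hp
  have hcomm : (Nat.card (commutingTuples G (Fin (m + 1))) : ZMod D) = 1 :=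
    natCast_card_commutingTuples_eq_one (by rwa [Nat.card_fin])
  rw [← card_conjClasses_commutingTuples_mul_card, Nat.cast_mul] at hcomm
  rw [← ZMod.intCast_eq_intCast_iff, Int.cast_natCast, Int.cast_pow, Int.cast_natCast]
  exact left_inv_eq_right_inv hcomm ((pow_succ' _ m).symm.trans hG)
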